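/- arXiv:1304.6633 — 2 statements merged into one kernel-verified Lean document; each statement's English description precedes it below -/
import Mathlib

section
/- Let {f_i : ℝⁿ → ℝ}_{i=1}^m be a finite collection of polynomials and let Z be the intersection of their zero sets. Then for every compact set K ⊆ ℝⁿ there exist constants C > 0 and α > 0 such that dist(x, Z)^α ≤ C·max_i |f_i(x)| for all x ∈ K. -/
/-!
Łojasiewicz's inequality by a nonstandard argument, with no quantifier elimination or resolution
of singularities.

If the inequality fails for all `C` and `α`, compactness of `K` gives points `x k ∈ K` whose
distances `d k` to `Z` tend to zero along an ultrafilter, with `|f i (x k)| ≤ d k ^ (k + 1)`. In the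
hyperreals let `x = [x k]` and `D = [(d k)⁻¹]`, an infinite element. The elements bounded by a power
of `D` form a convex subring, `moderate D`, with maximal ideal the elements below every negative
power of `D` (`Negl D`); all `f i (x)` are negligible.

The hyperreals inherit the intermediate value property for polynomials (`hyperreal_polyIVT`), so
`moderate D` satisfies Hensel's lemma (`hensel`). As the characteristic is zero, a maximal subfield
of `moderate D` containing `ℝ` represents every residue class (`exists_coefficient_field`). Replacing
the coordinates of `x` by their representatives in this field gives a point `y` with `f i (y)`
negligible and in the field, hence equal to zero (`exists_near_zero`). So there are points of `Z`
whose distance to `x k` is much smaller than `d k`, which is absurd.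
-/

/-! ### Moderate and negligible elements of an ordered field -/

section Convex
open Polynomial
variable {K : Type*} [Field K] [LinearOrder K] [IsStrictOrderedRing K]

/-- The convex subring of elements bounded by some power of `D` (for `2 ≤ D`). -/
def moderate (D : K) (hD : 2 ≤ D) : Subring K where
  carrier := {y | ∃ k : ℕ, |y| ≤ D ^ k}
  mul_mem' := by
    rintro x y ⟨k, hk⟩ ⟨l, hl⟩
    refine ⟨k + l, ?_⟩
    rw [abs_mul, pow_add]
    exact mul_le_mul hk hl (abs_nonneg _) (by positivity)
  one_mem' := ⟨0, by simp⟩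
  add_mem' := by
    rintro x y ⟨k, hk⟩ ⟨l, hl⟩
    refine ⟨max k l + 1, ?_⟩
    have h1 : D ^ k ≤ D ^ max k l := pow_le_pow_right₀ (by linarith) (le_max_left _ _)
    have h2 : D ^ l ≤ D ^ max k l := pow_le_pow_right₀ (by linarith) (le_max_right _ _)
    have h3 : 0 ≤ D ^ max k l := by positivity
    rw [pow_succ]
    nlinarith [abs_add_le x y]
  zero_mem' := ⟨0, by simp⟩
  neg_mem' := by
    rintro x ⟨k, hk⟩
    exact ⟨k, by simpa using hk⟩

/-- `y` is smaller than every negative power of `D`; these elements form the maximal ideal of the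
valuation ring `moderate D`. -/
def Negl (D : K) (y : K) : Prop := ∀ k : ℕ, |y| * D ^ k ≤ 1

variable {D : K} (hD : 2 ≤ D)

lemma mem_moderate {y : K} : y ∈ moderate D hD ↔ ∃ k : ℕ, |y| ≤ D ^ k := Iff.rfl

lemma negl_zero : Negl D 0 := fun k => by simp

omit [IsStrictOrderedRing K] in
lemma Negl.neg {x : K} (hx : Negl D x) : Negl D (-x) := fun k => by simpa using hx k

include hD in
lemma Negl.add {x y : K} (hx : Negl D x) (hy : Negl D y) : Negl D (x + y) := fun k => by
  have h1 := hx (k + 1)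
  have h2 := hy (k + 1)
  have h3 : 0 ≤ D ^ k := by positivity
  rw [pow_succ] at h1 h2
  have h4 : |x + y| * D ^ k ≤ (|x| + |y|) * D ^ k :=
    mul_le_mul_of_nonneg_right (abs_add_le x y) h3
  have h5 : (|x| + |y|) * D ^ k * 2 ≤ (|x| + |y|) * D ^ k * D :=
    mul_le_mul_of_nonneg_left hD (by positivity)
  linarith

lemma Negl.mul_left {x y : K} (hx : x ∈ moderate D hD) (hy : Negl D y) : Negl D (x * y) := by
  obtain ⟨j, hj⟩ := hx
  intro k
  have h1 := hy (j + k)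
  rw [abs_mul]
  calc |x| * |y| * D ^ k ≤ D ^ j * |y| * D ^ k := by gcongr
    _ = |y| * D ^ (j + k) := by ring
    _ ≤ 1 := h1

lemma inv_mem_moderate {y : K} (hy : ¬ Negl D y) : y⁻¹ ∈ moderate D hD := by
  simp only [Negl, not_forall, not_le] at hy
  obtain ⟨k, hk⟩ := hy
  have h0 : 0 < |y| := by
    rcases (abs_nonneg y).eq_or_lt with h | h
    · rw [← h] at hk; simp at hk; linarith
    · exact h
  refine ⟨k, ?_⟩
  rw [abs_inv, inv_le_iff_one_le_mul₀ h0, mul_comm]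
  exact hk.le

include hD in
lemma not_negl_one : ¬ Negl D (1 : K) := fun h => by
  have := h 1
  simp at this
  linarith

lemma Negl.eq_zero {y : K} (hy : Negl D y) (h : y⁻¹ ∈ moderate D hD) : y = 0 := by
  by_contra h0
  refine not_negl_one hD ?_
  have := Negl.mul_left hD h hy
  rwa [inv_mul_cancel₀ h0] at this

lemma Negl.mem {y : K} (hy : Negl D y) : y ∈ moderate D hD := ⟨0, by simpa using hy 0⟩

/-- A polynomial over `moderate D` is uniformly bounded on the unit interval. -/
lemma eval_bound (q : (moderate D hD)[X]) :
    ∃ l : ℕ, ∀ h : moderate D hD, |(h : K)| ≤ 1 → |((q.eval h : moderate D hD) : K)| ≤ D ^ l := by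
  induction q using Polynomial.induction_on' with
  | add p q hp hq =>
    obtain ⟨k, hk⟩ := hp
    obtain ⟨l, hl⟩ := hq
    refine ⟨max k l + 1, fun h hh => ?_⟩
    have h1 : D ^ k ≤ D ^ max k l := pow_le_pow_right₀ (by linarith) (le_max_left _ _)
    have h2 : D ^ l ≤ D ^ max k l := pow_le_pow_right₀ (by linarith) (le_max_right _ _)
    have h3 : 0 ≤ D ^ max k l := by positivity
    have h4 := hk h hh
    have h5 := hl h hh
    rw [pow_succ, eval_add, Subring.coe_add]
    nlinarith [abs_add_le ((p.eval h : moderate D hD) : K) (q.eval h : moderate D hD)]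
  | monomial n a =>
    obtain ⟨k, hk⟩ := a.2
    refine ⟨k, fun h hh => ?_⟩
    rw [eval_monomial, Subring.coe_mul, Subring.coe_pow, abs_mul, abs_pow]
    calc _ ≤ |(a : K)| * 1 := by
          gcongr
          exact pow_le_one₀ (abs_nonneg _) hh
      _ ≤ D ^ k := by simpa using hk

/-! ### Hensel's lemma -/

/-- The intermediate value property for polynomials. -/
def PolyIVT (K : Type*) [Field K] [LinearOrder K] : Prop :=
  ∀ (p : K[X]) (a b : K), a ≤ b → p.eval a ≤ 0 → 0 ≤ p.eval b →
    ∃ r, a ≤ r ∧ r ≤ b ∧ p.eval r = 0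

/-- Hensel's lemma when the derivative at `t` is positive: the linear term forces a sign change on a
small interval around `t`, and the root found there is close to `t`. -/
lemma hensel_pos (hI : PolyIVT K) (P : (moderate D hD)[X]) (t : moderate D hD)
    (h0 : Negl D ((P.eval t : moderate D hD) : K)) {a : ℕ}
    (h1 : 1 < ((P.derivative.eval t : moderate D hD) : K) * D ^ a) :
    ∃ r : moderate D hD, P.eval r = 0 ∧ Negl D ((r - t : moderate D hD) : K) := by
  obtain ⟨q, hq⟩ : ∃ q, q = (taylor t P).divX.divX := ⟨_, rfl⟩
  obtain ⟨e, he⟩ : ∃ e, e = P.eval t := ⟨_, rfl⟩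
  obtain ⟨c, hc⟩ : ∃ c, c = P.derivative.eval t := ⟨_, rfl⟩
  rw [← he] at h0
  rw [← hc] at h1
  have hexp : ∀ h : (moderate D hD), P.eval (t + h) = e + h * (c + h * q.eval h) := by
    intro h
    have h2 : (taylor t P) = (q * X + C c) * X + C e := by
      rw [hc, he, ← taylor_coeff_one, ← taylor_coeff_zero]
      conv_lhs => rw [← divX_mul_X_add (taylor t P), ← divX_mul_X_add (taylor t P).divX]
      simp [hq, coeff_divX]
    rw [add_comm t h, ← taylor_eval, h2]
    simp
    ring
  obtain ⟨l, hl⟩ := eval_bound hD q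
  have hD0 : 0 < D := by linarith
  -- `δ` is small enough for the linear term to dominate the quadratic one, yet not negligible
  set δ : K := (D ^ (a + l + 1))⁻¹ with hδ
  have hδ0 : 0 < δ := by positivity
  have hδ1 : δ ≤ 1 := inv_le_one_of_one_le₀ (one_le_pow₀ (by linarith))
  have hc0 : 0 < (c : K) := by
    by_contra hcon
    have : (c : K) * D ^ a ≤ 0 := mul_nonpos_of_nonpos_of_nonneg (not_lt.1 hcon) (by positivity)
    linarith
  have hδD : δ * D ^ l * D * D ^ a = 1 := by
    rw [hδ, pow_succ, pow_add]; field_simp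
  have hlin : ∀ h : (moderate D hD), |(h : K)| ≤ δ → (c : K) / 2 ≤ c + h * (q.eval h : (moderate D hD)) := by
    intro h hh
    have h2 := hl h (hh.trans hδ1)
    have h3 : |(h : K) * (q.eval h : (moderate D hD))| ≤ δ * D ^ l := by
      rw [abs_mul]; gcongr
    have h4 : δ * D ^ l * 2 ≤ c := by
      have hpos : 0 < D ^ a := by positivity
      by_contra hcon
      have h5 : (c : K) * D ^ a < δ * D ^ l * 2 * D ^ a :=
        mul_lt_mul_of_pos_right (not_le.1 hcon) hpos
      have h6 : δ * D ^ l * 2 * D ^ a ≤ δ * D ^ l * D * D ^ a := by gcongr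
      linarith
    have := neg_le_of_abs_le h3
    linarith
  have hδO : δ ∈ (moderate D hD) := ⟨0, by rw [abs_of_pos hδ0]; simpa using hδ1⟩
  have heδ : |(e : K)| ≤ δ * (c / 2) := by
    have h2 := h0 (a + l + 1 + (a + 1))
    have h3 : (D ^ (a + 1))⁻¹ ≤ (c : K) / 2 := by
      rw [inv_le_iff_one_le_mul₀ (by positivity), pow_succ]
      have : (c : K) / 2 * (D ^ a * 2) ≤ c / 2 * (D ^ a * D) := by gcongr
      nlinarith
    calc |(e : K)| ≤ (D ^ (a + l + 1 + (a + 1)))⁻¹ := by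
          rw [inv_eq_one_div, le_div_iff₀ (by positivity)]
          exact h2
      _ = δ * (D ^ (a + 1))⁻¹ := by rw [pow_add, mul_inv]
      _ ≤ _ := by gcongr
  have hev : ∀ x : (moderate D hD), (P.map (moderate D hD).subtype).eval (x : K) = (P.eval x : (moderate D hD)) := by
    intro x
    exact eval_map_apply (moderate D hD).subtype x
  obtain ⟨r, hr1, hr2, hr⟩ := hI (P.map (moderate D hD).subtype) (t - δ) (t + δ) (by linarith)
    (by
      have h2 := hev (t + -⟨δ, hδO⟩)
      have h3 := hlin (-⟨δ, hδO⟩) (by simp [abs_of_pos hδ0])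
      rw [hexp] at h2
      have h4 := le_of_abs_le heδ
      push_cast at h2 h3
      rw [← sub_eq_add_neg] at h2
      rw [h2]
      nlinarith)
    (by
      have h2 := hev (t + ⟨δ, hδO⟩)
      have h3 := hlin (⟨δ, hδO⟩) (by simp [abs_of_pos hδ0])
      rw [hexp] at h2
      have h4 := neg_le_of_abs_le heδ
      push_cast at h2 h3
      rw [h2]
      nlinarith)
  have hh : |r - t| ≤ δ := abs_le.2 ⟨by linarith, by linarith⟩
  let h : (moderate D hD) := ⟨r - t, 0, by simpa using hh.trans hδ1⟩
  have hrt : ((t + h : (moderate D hD)) : K) = r := by simp [h]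
  have hz : P.eval (t + h) = 0 := by
    apply Subtype.ext
    rw [← hev, hrt, hr]; rfl
  refine ⟨t + h, hz, ?_⟩
  have h2 := hlin h hh
  have h3 : |(h : K)| * (c / 2) ≤ |(e : K)| := by
    rw [hexp] at hz
    have h4 : (e : K) = - (h * (c + h * (q.eval h : (moderate D hD)))) := by
      have := congrArg (Subtype.val) hz
      push_cast at this
      linarith
    rw [h4, abs_neg, abs_mul]
    gcongr
    exact h2.trans (le_abs_self _)
  intro k
  have hsub : ((t + h - t : moderate D hD) : K) = h := by simp
  rw [hsub]
  have h4 := h0 (k + a + 1)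
  have h5 : |(h : K)| * D ^ k * 1 ≤ |(h : K)| * D ^ k * (c * D ^ a) := by gcongr
  have h6 : |(h : K)| * (c / 2) * (D ^ (k + a) * 2) ≤ |(e : K)| * (D ^ (k + a) * D) := by gcongr
  rw [pow_succ] at h4
  rw [pow_add] at h4 h6
  linarith

/-- **Hensel's lemma** for the convex subring `moderate D`. -/
lemma hensel (hI : PolyIVT K) (P : (moderate D hD)[X]) (t : moderate D hD)
    (h0 : Negl D ((P.eval t : moderate D hD) : K))
    (h1 : ¬ Negl D ((P.derivative.eval t : moderate D hD) : K)) :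
    ∃ r : moderate D hD, P.eval r = 0 ∧ Negl D ((r - t : moderate D hD) : K) := by
  simp only [Negl, not_forall, not_le] at h1
  obtain ⟨a, ha⟩ := h1
  rcases abs_cases ((P.derivative.eval t : moderate D hD) : K) with h | h
  · rw [h.1] at ha
    exact hensel_pos hD hI P t h0 ha
  · rw [h.1] at ha
    obtain ⟨r, hr, hrt⟩ := hensel_pos hD hI (-P) t (by simpa using h0.neg) (a := a)
      (by simpa using ha)
    exact ⟨r, by simpa using hr, hrt⟩


/-! ### Coefficient fields and approximate zeros -/

/-- The valuation ring `moderate D` has a coefficient field: a subfield containing a complete set of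
representatives modulo the negligible elements. It can be chosen to contain any given subfield of
moderate elements. -/
theorem exists_coefficient_field (hI : PolyIVT K) (R : Subfield K)
    (hR : ∀ x ∈ R, x ∈ moderate D hD) :
    ∃ F : Subfield K, R ≤ F ∧ (∀ x ∈ F, x ∈ moderate D hD) ∧
      ∀ t ∈ moderate D hD, ∃ s ∈ F, Negl D (t - s) := by
  obtain ⟨F, hRF, hF⟩ := zorn_le_nonempty₀ {F : Subfield K | ∀ x ∈ F, x ∈ moderate D hD}
    (by
      intro c hc hchain y hy
      refine ⟨sSup c, ?_, fun z hz => le_sSup hz⟩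
      intro x hx
      rw [Subfield.mem_sSup_of_directedOn ⟨y, hy⟩ hchain.directedOn] at hx
      obtain ⟨s, hs, hxs⟩ := hx
      exact hc hs x hxs) R hR
  have hFO : ∀ x ∈ F, x ∈ moderate D hD := hF.prop
  refine ⟨F, hRF, hFO, fun t ht => ?_⟩
  have hmax : ∀ u : K, (∀ x ∈ IntermediateField.adjoin F {u}, x ∈ moderate D hD) → u ∈ F := by
    intro u hu
    have hle : F ≤ (IntermediateField.adjoin F {u}).toSubfield := fun x hx =>
      (IntermediateField.adjoin F {u}).algebraMap_mem ⟨x, hx⟩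
    exact hF.le_of_ge (y := (IntermediateField.adjoin F {u}).toSubfield) hu hle
      (IntermediateField.mem_adjoin_simple_self F u)
  let inc : F →+* moderate D hD := F.subtype.codRestrict (moderate D hD) (fun x => hFO x x.2)
  have hinc : ∀ (p : F[X]) (u : moderate D hD),
      (((p.map inc).eval u : moderate D hD) : K) = aeval (u : K) p := by
    intro p u
    rw [eval_map, aeval_def, ← Subring.subtype_apply, hom_eval₂]
    rfl
  have hpO : ∀ (p : F[X]) (u : K), u ∈ moderate D hD → aeval u p ∈ moderate D hD := by
    intro p u hu
    have := hinc p ⟨u, hu⟩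
    rw [← this]
    exact Subtype.prop _
  by_cases hA : ∀ p : F[X], p ≠ 0 → ¬ Negl D (aeval t p)
  · -- `t` is transcendental over `F` modulo negligible elements, so `F(t)` is still moderate
    refine ⟨t, hmax t ?_, by simpa using negl_zero⟩
    intro x hx
    obtain ⟨p, q, rfl⟩ := (IntermediateField.mem_adjoin_simple_iff F x).1 hx
    rcases eq_or_ne q 0 with rfl | hq
    · simp [zero_mem]
    · rw [div_eq_mul_inv]
      exact mul_mem (hpO p t ht) (inv_mem_moderate hD (hA q hq))
  · -- otherwise a polynomial of least degree that is negligible at `t` has a nearby simple root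
    push Not at hA
    classical
    have hex : ∃ n : ℕ, ∃ p : F[X], p ≠ 0 ∧ Negl D (aeval t p) ∧ p.natDegree = n := by
      obtain ⟨p, h1, h2⟩ := hA
      exact ⟨_, p, h1, h2, rfl⟩
    obtain ⟨p, hp0, hpn, hpd⟩ := Nat.find_spec hex
    have hmin : ∀ q : F[X], q.natDegree < p.natDegree → Negl D (aeval t q) → q = 0 := by
      intro q hq hqn
      by_contra h
      rw [hpd] at hq
      exact Nat.find_min hex hq ⟨q, h, hqn, rfl⟩
    have hd : p.natDegree ≠ 0 := by
      intro h
      obtain ⟨a, rfl⟩ := natDegree_eq_zero.1 h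
      rw [aeval_C] at hpn
      have h0 : algebraMap F K a = 0 := hpn.eq_zero hD (hFO _ (inv_mem a.2))
      apply hp0
      rw [(map_eq_zero _).1 h0, C_0]
    have hder : ¬ Negl D (aeval t (derivative p)) := by
      intro h
      have h0 := hmin _ (natDegree_derivative_lt hd) h
      exact hd (derivative_eq_zero.1 h0)
    obtain ⟨r, hr, hrn⟩ := hensel hD hI (p.map inc) ⟨t, ht⟩ (by rwa [hinc])
      (by rwa [derivative_map, hinc])
    have hroot : aeval (r : K) p = 0 := by rw [← hinc, hr]; rfl
    refine ⟨r, hmax r ?_, ?_⟩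
    · intro x hx
      have halg : IsAlgebraic F (r : K) := ⟨p, hp0, hroot⟩
      rw [← IntermediateField.mem_toSubalgebra,
        IntermediateField.adjoin_simple_toSubalgebra_of_isAlgebraic halg,
        Algebra.adjoin_singleton_eq_range_aeval] at hx
      obtain ⟨q, rfl⟩ := hx
      exact hpO q r r.2
    · have := hrn.neg
      simpa using this

/-- Negligibly close points have negligibly close values under polynomials. -/
lemma negl_eval_sub {σ S : Type*} [CommRing S] (φ : S →+* K)
    (hφ : ∀ s, φ s ∈ moderate D hD) (x y : σ → K) (hx : ∀ j, x j ∈ moderate D hD)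
    (hy : ∀ j, y j ∈ moderate D hD) (hxy : ∀ j, Negl D (x j - y j)) (p : MvPolynomial σ S) :
    p.eval₂ φ x ∈ moderate D hD ∧ p.eval₂ φ y ∈ moderate D hD ∧
      Negl D (p.eval₂ φ x - p.eval₂ φ y) := by
  induction p using MvPolynomial.induction_on with
  | C a => simpa using ⟨hφ a, negl_zero⟩
  | add p q hp hq =>
    simp only [MvPolynomial.eval₂_add]
    refine ⟨add_mem hp.1 hq.1, add_mem hp.2.1 hq.2.1, ?_⟩
    rw [add_sub_add_comm]
    exact hp.2.2.add hD hq.2.2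
  | mul_X p j hp =>
    simp only [MvPolynomial.eval₂_mul, MvPolynomial.eval₂_X]
    refine ⟨mul_mem hp.1 (hx j), mul_mem hp.2.1 (hy j), ?_⟩
    have h1 := (hxy j).mul_left hD hp.1
    have h2 := hp.2.2.mul_left hD (hy j)
    have := h1.add hD h2
    convert this using 1
    ring

/-- An approximate zero of polynomials with moderate coefficients is negligibly close to an exact
zero: move its coordinates into a coefficient field, where negligible elements vanish. -/
theorem exists_near_zero {σ κ : Type*} {k : Type*} [Field k] (hI : PolyIVT K) (φ : k →+* K)
    (hφ : ∀ s, φ s ∈ moderate D hD) (f : κ → MvPolynomial σ k) (x : σ → K)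
    (hx : ∀ j, x j ∈ moderate D hD) (hf : ∀ i, Negl D ((f i).eval₂ φ x)) :
    ∃ y : σ → K, (∀ j, Negl D (x j - y j)) ∧ ∀ i, (f i).eval₂ φ y = 0 := by
  obtain ⟨F, hRF, hFO, hF⟩ := exists_coefficient_field hD hI φ.fieldRange
    (by rintro _ ⟨s, rfl⟩; exact hφ s)
  choose y hyF hy using fun j => hF (x j) (hx j)
  refine ⟨y, hy, fun i => ?_⟩
  have hmem : (f i).eval₂ φ y ∈ F := by
    rw [MvPolynomial.eval₂_eq]
    exact sum_mem fun d _ => mul_mem (hRF ⟨_, rfl⟩) (prod_mem fun j _ => pow_mem (hyF j) _)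
  have h1 := (negl_eval_sub hD φ hφ x y hx (fun j => hFO _ (hyF j)) hy (f i)).2.2
  have h2 := (hf i).add hD h1.neg
  rw [neg_sub, add_sub_cancel] at h2
  exact h2.eq_zero hD (hFO _ (inv_mem hmem))

end Convex

/-! ### Polynomials over the hyperreals -/

section Hyper
open Filter Hyperreal Polynomial

/-- The quotient map from real sequences to hyperreals. -/
noncomputable def seqHom : (ℕ → ℝ) →+* ℝ* := Filter.Germ.coeRingHom (hyperfilter ℕ : Filter ℕ)

lemma seqHom_apply (u : ℕ → ℝ) : seqHom u = ofSeq u := rfl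

lemma seqHom_eq_iff {u v : ℕ → ℝ} : seqHom u = seqHom v ↔ ∀ᶠ k in hyperfilter ℕ, u k = v k :=
  Filter.Germ.coe_eq

lemma abs_seqHom (u : ℕ → ℝ) : |seqHom u| = seqHom |u| := by
  rcases le_total 0 (seqHom u) with h | h
  · rw [abs_of_nonneg h, seqHom_eq_iff]
    have h' : ofSeq 0 ≤ ofSeq u := h
    filter_upwards [ofSeq_le_ofSeq.1 h'] with k hk
    exact (abs_of_nonneg hk).symm
  · rw [abs_of_nonpos h, ← map_neg, seqHom_eq_iff]
    have h' : ofSeq u ≤ ofSeq 0 := h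
    filter_upwards [ofSeq_le_ofSeq.1 h'] with k hk
    exact (abs_of_nonpos hk).symm

lemma hyperreal_polyIVT : PolyIVT ℝ* := by
  intro p a b hab ha hb
  obtain ⟨q, rfl⟩ := Polynomial.map_surjective seqHom ofSeq_surjective p
  obtain ⟨a, rfl⟩ := ofSeq_surjective a
  obtain ⟨b, rfl⟩ := ofSeq_surjective b
  simp only [← seqHom_apply, eval_map_apply] at ha hb ⊢
  have hcoord : ∀ (u : ℕ → ℝ) k, (q.eval u) k = (q.map (Pi.evalRingHom _ k)).eval (u k) := by
    intro u k
    exact (eval_map_apply (Pi.evalRingHom (fun _ : ℕ => ℝ) k) u).symm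
  have ha' : ofSeq (q.eval a) ≤ ofSeq 0 := ha
  have hb' : ofSeq 0 ≤ ofSeq (q.eval b) := hb
  have key : ∀ k, ∃ r : ℝ, a k ≤ b k → (q.eval a) k ≤ 0 → 0 ≤ (q.eval b) k →
      a k ≤ r ∧ r ≤ b k ∧ (q.map (Pi.evalRingHom _ k)).eval r = 0 := by
    intro k
    by_cases h : a k ≤ b k ∧ (q.eval a) k ≤ 0 ∧ 0 ≤ (q.eval b) k
    · obtain ⟨h1, h2, h3⟩ := h
      rw [hcoord] at h2 h3
      obtain ⟨r, hr, hr0⟩ := intermediate_value_Icc h1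
        (q.map (Pi.evalRingHom (fun _ : ℕ => ℝ) k)).continuous.continuousOn ⟨h2, h3⟩
      exact ⟨r, fun _ _ _ => ⟨hr.1, hr.2, hr0⟩⟩
    · exact ⟨0, fun h1 h2 h3 => absurd ⟨h1, h2, h3⟩ h⟩
  choose r hr using key
  have hev : ∀ᶠ k in hyperfilter ℕ, a k ≤ r k ∧ r k ≤ b k ∧ (q.eval r) k = 0 := by
    filter_upwards [ofSeq_le_ofSeq.1 hab, ofSeq_le_ofSeq.1 ha', ofSeq_le_ofSeq.1 hb']
      with k h1 h2 h3
    rw [hcoord]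
    exact hr k h1 h2 h3
  refine ⟨seqHom r, ofSeq_le_ofSeq.2 (hev.mono fun k h => h.1),
    ofSeq_le_ofSeq.2 (hev.mono fun k h => h.2.1), ?_⟩
  rw [eval_map_apply, ← map_zero seqHom, seqHom_eq_iff]
  exact hev.mono fun k h => h.2.2

/-- Evaluation of a real polynomial at a hyperreal point is computed termwise. -/
lemma eval₂_seqHom {σ : Type*} (p : MvPolynomial σ ℝ) (u : σ → ℕ → ℝ) :
    p.eval₂ (seqHom.comp (Pi.constRingHom ℕ ℝ)) (fun j => seqHom (u j)) =
      seqHom (fun k => MvPolynomial.eval (fun j => u j k) p) := by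
  refine (MvPolynomial.eval₂_comp_left seqHom (Pi.constRingHom ℕ ℝ) u p).symm.trans ?_
  congr 1
  funext k
  exact MvPolynomial.eval₂_comp_left (Pi.evalRingHom (fun _ : ℕ => ℝ) k) _ u p

end Hyper

/-! ### The inequality -/

/-- Multi-polynomial Łojasiewicz inequality: given a finite family of real polynomials
on `ℝⁿ` with nonempty common zero set `Z`, for every compact set `K` there are
constants `C, α > 0` such that `dist(x,Z)^α ≤ C·max_i |f_i(x)|` for all `x ∈ K`. -/
theorem lojasiewicz_multi {n : ℕ} {ι : Type*} [Fintype ι] [Nonempty ι]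
    (f : ι → MvPolynomial (Fin n) ℝ)
    (Z : Set (EuclideanSpace ℝ (Fin n)))
    (hZ : Z = {x : EuclideanSpace ℝ (Fin n) | ∀ i, MvPolynomial.eval (fun j => x j) (f i) = 0})
    (hZne : Z.Nonempty)
    (K : Set (EuclideanSpace ℝ (Fin n))) (hK : IsCompact K) :
    ∃ C > (0 : ℝ), ∃ α > (0 : ℝ), ∀ x ∈ K,
      Metric.infDist x Z ^ α
        ≤ C * Finset.univ.sup' Finset.univ_nonempty
            (fun i => |MvPolynomial.eval (fun j => x j) (f i)|) := by
  classical
  by_contra hcon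
  push Not at hcon
  obtain ⟨B', hB'⟩ := hK.exists_bound_of_continuousOn (f := fun x => Metric.infDist x Z)
    (Metric.continuous_infDist_pt Z).continuousOn
  obtain ⟨R, hR⟩ := hK.exists_bound_of_continuousOn (f := fun x => x) continuousOn_id
  obtain ⟨B, hB1, hB⟩ : ∃ B : ℝ, 1 ≤ B ∧ ∀ x ∈ K, Metric.infDist x Z ≤ B :=
    ⟨max 1 B', le_max_left _ _, fun x hx =>
      (le_abs_self _).trans ((hB' x hx).trans (le_max_right _ _))⟩
  -- the factor `B ^ (k + 1)` also makes the values of `f` tend to zero along the sequence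
  choose x hxK hx using fun k : ℕ =>
    hcon ((k + 1) * B ^ (k + 1)) (by positivity) ((k + 1 : ℕ) : ℝ) (by positivity)
  set d : ℕ → ℝ := fun k => Metric.infDist (x k) Z with hd
  have hBk : ∀ k : ℕ, 1 ≤ B ^ (k + 1) := fun k => one_le_pow₀ hB1
  have hfi : ∀ k i, (k + 1) * B ^ (k + 1) * |MvPolynomial.eval (fun j => x k j) (f i)|
      < d k ^ (k + 1) := by
    intro k i
    have h1 := hx k
    rw [Real.rpow_natCast] at h1
    refine lt_of_le_of_lt ?_ h1
    gcongr
    exact Finset.le_sup' (fun i => |MvPolynomial.eval (fun j => x k j) (f i)|) (Finset.mem_univ i)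
  have hd0' : ∀ k, 0 ≤ d k := fun k => Metric.infDist_nonneg
  have hd0 : ∀ k, 0 < d k := by
    intro k
    refine lt_of_le_of_ne (hd0' k) fun h => ?_
    have h1 := hfi k (Classical.arbitrary ι)
    rw [← h, zero_pow (Nat.succ_ne_zero k)] at h1
    exact absurd h1 (not_lt.2 (by positivity))
  have hsmall : ∀ k i, |MvPolynomial.eval (fun j => x k j) (f i)| ≤ d k ^ (k + 1) := by
    intro k i
    refine le_trans ?_ (hfi k i).le
    have h1 : (1 : ℝ) ≤ (k + 1) * B ^ (k + 1) := by
      have : (1 : ℝ) ≤ k + 1 := by linarith [(Nat.cast_nonneg k : (0 : ℝ) ≤ k)]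
      exact one_le_mul_of_one_le_of_one_le this (hBk k)
    exact le_mul_of_one_le_left (abs_nonneg _) h1
  have hvan : ∀ k i, |MvPolynomial.eval (fun j => x k j) (f i)| ≤ 1 / ((k : ℝ) + 1) := by
    intro k i
    have h1 : d k ^ (k + 1) ≤ B ^ (k + 1) := pow_le_pow_left₀ (hd0' k) (hB _ (hxK k)) _
    have h2 := (hfi k i).le.trans h1
    rw [le_div_iff₀ (by positivity)]
    have h3 : 0 < B ^ (k + 1) := by linarith [hBk k]
    by_contra h4
    nlinarith
  obtain ⟨x₀, -, hx₀⟩ := hK.ultrafilter_le_nhds (Ultrafilter.map x (Filter.hyperfilter ℕ))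
    (Filter.le_principal_iff.2 (Ultrafilter.mem_map.2
      (Filter.univ_mem' hxK)))
  have hlim : Filter.Tendsto x (Filter.hyperfilter ℕ) (nhds x₀) := hx₀
  have hx₀Z : x₀ ∈ Z := by
    rw [hZ]
    intro i
    have hcont : Continuous fun y : EuclideanSpace ℝ (Fin n) =>
        MvPolynomial.eval (fun j => y j) (f i) :=
      (MvPolynomial.continuous_eval (f i)).comp (continuous_pi fun j => by fun_prop)
    refine tendsto_nhds_unique ((hcont.tendsto x₀).comp hlim) ?_
    refine (squeeze_zero_norm (fun k => ?_)
      tendsto_one_div_add_atTop_nhds_zero_nat).mono_left Nat.hyperfilter_le_atTop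
    exact hvan k i
  have hdlim : Filter.Tendsto d (Filter.hyperfilter ℕ) (nhds 0) := by
    have := ((Metric.continuous_infDist_pt Z).tendsto x₀).comp hlim
    rwa [Metric.infDist_zero_of_mem hx₀Z] at this
  have hDlim : Filter.Tendsto (fun k => (d k)⁻¹) (Filter.hyperfilter ℕ) Filter.atTop :=
    tendsto_inv_nhdsGT_zero.comp (tendsto_nhdsWithin_iff.2
      ⟨hdlim, Filter.Eventually.of_forall hd0⟩)
  set D : Hyperreal := seqHom fun k => (d k)⁻¹ with hDdef
  have hD : 2 ≤ D := Hyperreal.ofSeq_le_ofSeq (f := fun _ => 2).2 (hDlim.eventually_ge_atTop 2)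
  have hmod : ∀ (u : ℕ → ℝ) (r : ℝ), (∀ k, |u k| ≤ r) → seqHom u ∈ moderate D hD := by
    intro u r hu
    refine ⟨1, ?_⟩
    rw [pow_one, abs_seqHom]
    refine Hyperreal.ofSeq_le_ofSeq.2 ?_
    filter_upwards [hDlim.eventually_ge_atTop r] with k hk
    exact (hu k).trans hk
  have hneglf : ∀ i, Negl D ((f i).eval₂ (seqHom.comp (Pi.constRingHom ℕ ℝ))
      fun j => seqHom fun k => x k j) := by
    intro i m
    rw [eval₂_seqHom, abs_seqHom, hDdef, ← map_pow, ← map_mul, ← map_one seqHom]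
    refine Hyperreal.ofSeq_le_ofSeq.2 ?_
    filter_upwards [hDlim.eventually_ge_atTop 1,
      Nat.hyperfilter_le_atTop (Filter.eventually_ge_atTop m)] with k hk hm
    change |MvPolynomial.eval (fun j => x k j) (f i)| * (d k)⁻¹ ^ m ≤ 1
    have h1 : d k ≤ 1 := by
      have := inv_le_one_of_one_le₀ hk
      rwa [inv_inv] at this
    rw [inv_pow, ← div_eq_mul_inv, div_le_one (pow_pos (hd0 k) m)]
    exact (hsmall k i).trans (pow_le_pow_of_le_one (hd0' k) h1 (by omega))
  obtain ⟨y, hy, hyf⟩ := exists_near_zero hD hyperreal_polyIVT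
    (seqHom.comp (Pi.constRingHom ℕ ℝ)) (fun s => hmod _ |s| fun _ => le_rfl) f
    (fun j => seqHom fun k => x k j)
    (fun j => hmod _ R fun k => (PiLp.norm_apply_le (x k) j).trans (hR _ (hxK k))) hneglf
  choose v hv using fun j => Hyperreal.ofSeq_surjective (y j)
  obtain rfl : (fun j => seqHom (v j)) = y := funext hv
  have hzero : ∀ᶠ k in Filter.hyperfilter ℕ, ∀ i,
      MvPolynomial.eval (fun j => v j k) (f i) = 0 := by
    rw [Filter.eventually_all]
    intro i
    have h1 := hyf i
    rw [eval₂_seqHom, ← map_zero seqHom, seqHom_eq_iff] at h1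
    exact h1
  have hclose : ∀ᶠ k in Filter.hyperfilter ℕ, ∀ j, |x k j - v j k| * (d k)⁻¹ ^ 2 ≤ 1 := by
    rw [Filter.eventually_all]
    intro j
    have h1 := hy j 2
    rw [← map_sub, abs_seqHom, hDdef, ← map_pow, ← map_mul, ← map_one seqHom] at h1
    exact Hyperreal.ofSeq_le_ofSeq.1 h1
  obtain ⟨k, hk1, hk2, hk3⟩ :=
    (hzero.and (hclose.and (hDlim.eventually_ge_atTop ((n : ℝ) + 1)))).exists
  set w : EuclideanSpace ℝ (Fin n) := WithLp.toLp 2 fun j => v j k with hw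
  have hwZ : w ∈ Z := by
    rw [hZ]
    exact hk1
  have hdist : d k ≤ dist (x k) w := Metric.infDist_le_dist_of_mem hwZ
  have hdk := hd0 k
  have hsq : dist (x k) w ^ 2 ≤ n * (d k ^ 2) ^ 2 := by
    rw [EuclideanSpace.dist_eq, Real.sq_sqrt (Finset.sum_nonneg fun _ _ => by positivity)]
    have : ∀ j ∈ (Finset.univ : Finset (Fin n)), dist (x k j) (w j) ^ 2 ≤ (d k ^ 2) ^ 2 := by
      intro j _
      have h1 := hk2 j
      rw [inv_pow, ← div_eq_mul_inv, div_le_one (by positivity)] at h1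
      exact pow_le_pow_left₀ dist_nonneg h1 2
    simpa using Finset.sum_le_card_nsmul _ _ _ this
  have h4 : d k ^ 2 ≤ n * (d k ^ 2) ^ 2 := (pow_le_pow_left₀ hdk.le hdist 2).trans hsq
  -- hence `1 ≤ n * d k ^ 2`, whereas `(n + 1) * d k ≤ 1`
  have h5 : 1 ≤ n * d k ^ 2 := by
    by_contra h
    nlinarith [pow_pos hdk 2]
  rw [le_inv_comm₀ (by positivity) hdk, inv_eq_one_div, le_div_iff₀ (by positivity)] at hk3
  have hn : (0 : ℝ) ≤ n := Nat.cast_nonneg n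
  have h6 : d k ≤ 1 := by nlinarith
  nlinarith
end

section
/- Let (X, d_X) be a metric space, and let Y be a metric space with h : Y → X such that h is ψ-Lipschitz at large distances. Suppose γ₀, γ₁ : [−L, L] → X are unit-speed minimizing geodesics in a CBB(0) space X with d_X(γ₀(0), γ₁(0)) ≤ ε·L for some ε ∈ (0,1). Then there exists a constant α ≥ 0 such that |d_X(γ₀(x), γ₁(x)) − α·x| ≤ 30·ε·L for all x ∈ [0, √ε·L]. -/
/-!
Rescale to `L = 1`, put `ρ = √ε`, `d s t = d(γ₀ s, γ₁ t)` and `D = d 0 0 ≤ ρ²`. Nonnegative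
curvature says that `d s t ² - s²` is concave in `s` and `d s t ² - t²` is concave in `t` on the
whole interval `[-1, 1]`. A concave function is affine on a small interval around `0` up to its
midpoint defect over a larger one (`concave_near_line`), and the triangle inequality bounds these
defects because the geodesics are minimizing on both sides of `0` (`sq_foot_le`). Concretely:

* Let `u t` be the foot of `γ₁ t` in the comparison triangle over `γ₀`. Concavity in `s` gives
  `d t t ² = t² + d 0 t ² - 2 t u t` up to `|t| (d 0 t ² - (u t)²)`.
* Concavity in `t` gives `d 0 t ² = t² + m t + D²` up to `|t| D²`.
* Both `d (±1) t ² - t²` are concave, and their sum is almost constant for `|t| ≤ ρ`. Hence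
  each is almost affine there, and `u t` is close to `u 0 + k t`.

Therefore `d t t ²` is the quadratic `2 (1 - k) t² + b t`, up to `O(ρ (1 - k) t²) + O(ρ⁴)`, for
`|t| ≤ ρ`. Since it is nonnegative for both signs of `t`, the linear coefficient `b` is small,
and with `α² = 2 (1 - k)` taking square roots gives `|d t t - α t| = O(ρ²)`
(`linear_of_sq_near_quadratic`). These estimates need `ρ < 1/29`. Otherwise the triangle
inequality alone gives the bound with `α = 1`.
-/

/-- A metric space has curvature bounded below by 0 (CBB(0)) if every pair of points
is joined by a constant-speed geodesic, and along any such geodesic the squared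
distance to an arbitrary point satisfies the reverse Euclidean comparison
(concavity) inequality. -/
def CBB0 (X : Type*) [MetricSpace X] : Prop :=
  (∀ x y : X, ∃ γ : ℝ → X, γ 0 = x ∧ γ 1 = y ∧
    ∀ s ∈ Set.Icc (0 : ℝ) 1, ∀ t ∈ Set.Icc (0 : ℝ) 1,
      dist (γ s) (γ t) = |s - t| * dist x y) ∧
  (∀ γ : ℝ → X,
    (∀ s ∈ Set.Icc (0 : ℝ) 1, ∀ t ∈ Set.Icc (0 : ℝ) 1,
      dist (γ s) (γ t) = |s - t| * dist (γ 0) (γ 1)) →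
    ∀ z : X, ∀ t ∈ Set.Icc (0 : ℝ) 1,
      (1 - t) * dist z (γ 0) ^ 2 + t * dist z (γ 1) ^ 2
          - t * (1 - t) * dist (γ 0) (γ 1) ^ 2
        ≤ dist z (γ t) ^ 2)

/-! ### Real-variable inequalities -/

lemma concave_combo {g : ℝ → ℝ} (hg : ConcaveOn ℝ (Set.Icc (-1) 1) g) {x y a b : ℝ}
    (hx : x ∈ Set.Icc (-1 : ℝ) 1) (hy : y ∈ Set.Icc (-1 : ℝ) 1) (ha : 0 ≤ a) (hb : 0 ≤ b)
    (hab : a + b = 1) : a * g x + b * g y ≤ g (a * x + b * y) :=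
  hg.2 hx hy ha hb hab

/-- A concave function on `[-1, 1]` whose values at `±R` have mean at least `w` is close, on
`[-R, R]`, to the line through `(0, g 0)` parallel to the chord over `[-R, R]`. The distance to
that line is controlled by the midpoint defect `g 0 - w`. -/
lemma concave_near_line {g : ℝ → ℝ} (hg : ConcaveOn ℝ (Set.Icc (-1) 1) g) {R w s : ℝ}
    (hR : 0 < R) (hR1 : R ≤ 1) (hw : 2 * w ≤ g R + g (-R)) (hs : |s| ≤ R) :
    |g s - g 0 - s / R * ((g R - g (-R)) / 2)| ≤ |s| / R * (g 0 - w) := by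
  have key : ∀ h : ℝ → ℝ, ConcaveOn ℝ (Set.Icc (-1) 1) h → 2 * w ≤ h R + h (-R) →
      ∀ x, 0 ≤ x → x ≤ R →
      |h x - h 0 - x / R * ((h R - h (-R)) / 2)| ≤ x / R * (h 0 - w) := by
    intro h hh hw x hx0 hxR
    set y := x / R with hy
    have hxy : x = y * R := by rw [hy]; field_simp
    have hy0 : 0 ≤ y := by positivity
    have hy1 : y ≤ 1 := by rw [hy, div_le_one hR]; exact hxR
    have h1 := concave_combo hh (x := 0) (y := R) ⟨by norm_num, by norm_num⟩ ⟨by linarith, hR1⟩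
      (a := 1 - y) (b := y) (by linarith) hy0 (by ring)
    have h2 := concave_combo hh (x := x) (y := -R) ⟨by linarith, by linarith⟩ ⟨by linarith, by linarith⟩
      (a := 1 / (1 + y)) (b := y / (1 + y)) (by positivity) (by positivity) (by field_simp)
    have e1 : (1 - y) * 0 + y * R = x := by rw [hxy]; ring
    have e2 : 1 / (1 + y) * x + y / (1 + y) * -R = 0 := by rw [hxy]; field_simp; ring
    rw [e1] at h1
    rw [e2] at h2
    have h3 : h x + y * h (-R) ≤ (1 + y) * h 0 := by
      have : 1 / (1 + y) * h x + y / (1 + y) * h (-R) = (h x + y * h (-R)) / (1 + y) := by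
        field_simp
      rw [this, div_le_iff₀ (by positivity)] at h2
      linarith
    have h4 : 0 ≤ y * (h R + h (-R) - 2 * w) := mul_nonneg hy0 (by linarith)
    rw [abs_le]
    constructor <;> nlinarith
  rcases le_total 0 s with h0 | h0
  · rw [abs_of_nonneg h0] at hs ⊢
    exact key g hg hw s h0 hs
  · rw [abs_of_nonpos h0] at hs ⊢
    have hneg : ConcaveOn ℝ (Set.Icc (-1) 1) (fun x => g (-x)) := by
      refine ⟨hg.1, fun x hx y hy a b ha hb hab => ?_⟩
      have := concave_combo hg (x := -x) (y := -y) ⟨by linarith [hx.2], by linarith [hx.1]⟩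
        ⟨by linarith [hy.2], by linarith [hy.1]⟩ ha hb hab
      simp only [smul_eq_mul]
      rw [show -(a * x + b * y) = a * -x + b * -y by ring]
      exact this
    have := key (fun x => g (-x)) hneg (by simpa [add_comm] using hw) (-s) (by linarith) hs
    simp only [neg_neg, neg_zero] at this
    convert this using 2
    ring

/-- The Euclidean triangle over a base of length `2` with other sides `x`, `y` has its apex at
horizontal coordinate `(y² - x²) / 4` from the midpoint, and at nonnegative squared height. -/
lemma sq_foot_le {x y : ℝ} (h1 : 2 ≤ x + y) (h2 : |x - y| ≤ 2) :
    ((y ^ 2 - x ^ 2) / 4) ^ 2 ≤ (x ^ 2 + y ^ 2) / 2 - 1 := by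
  have h3 : (x - y) ^ 2 ≤ 4 := by
    rw [← sq_abs]; nlinarith [abs_nonneg (x - y)]
  have h4 : 4 ≤ (x + y) ^ 2 := by nlinarith
  nlinarith [mul_nonneg (sub_nonneg.2 h3) (sub_nonneg.2 h4)]

lemma two_le_sq_add_sq {x y : ℝ} (h : 2 ≤ x + y) : 2 ≤ x ^ 2 + y ^ 2 := by
  nlinarith [sq_nonneg (x - y)]

lemma abs_sq_sub_sq_le {p q D : ℝ} (hD : D ≤ 1) (hp : |p - 1| ≤ D) (hq : |q - 1| ≤ D) :
    |p ^ 2 - q ^ 2| ≤ 4 * D := by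
  rw [abs_le] at *
  constructor <;> nlinarith

/-- If `f²` agrees with the quadratic `α² t² + b t` up to a small relative and an
`O(ρ⁴)` absolute error on `[-ρ, ρ]`, then `f` agrees with `α t` up to `O(ρ²)` on `[0, ρ]`:
nonnegativity of `f²` at points of both signs forces `b` to be of order `α ρ²`
(or `b ρ = O(ρ⁴)` when `α` is of order `ρ`). -/
lemma linear_of_sq_near_quadratic {f : ℝ → ℝ} {ρ α b : ℝ} (hρ : 0 < ρ) (hρ1 : ρ < 1 / 29)
    (hf : ∀ t, 0 ≤ f t) (hα : 0 ≤ α) (hα1 : α ≤ 2.1)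
    (H : ∀ t, |t| ≤ ρ →
      |f t ^ 2 - α ^ 2 * t ^ 2 - b * t| ≤ 3.25 * ρ * α ^ 2 * t ^ 2 + 12 * ρ ^ 4)
    {t : ℝ} (ht0 : 0 ≤ t) (ht : t ≤ ρ) : |f t - α * t| ≤ 30 * ρ ^ 2 := by
  have hb : ∀ x, 0 ≤ x → x ≤ ρ → |b| * x ≤ 1.12 * (α * x) ^ 2 + 12 * ρ ^ 4 := by
    intro x hx hxρ
    have h1 := (abs_le.1 (H x (by rwa [abs_of_nonneg hx]))).2
    have h2 := (abs_le.1 (H (-x) (by rwa [abs_neg, abs_of_nonneg hx]))).2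
    have h3 : ρ * (α * x) ^ 2 ≤ 1 / 29 * (α * x) ^ 2 :=
      mul_le_mul_of_nonneg_right hρ1.le (sq_nonneg _)
    have h4 := sq_nonneg (α * x)
    have h5 := sq_nonneg (f x)
    have h6 := sq_nonneg (f (-x))
    rcases abs_cases b with ⟨hb, _⟩ | ⟨hb, _⟩ <;> rw [hb] <;> nlinarith
  have hαt : α * t ≤ 2.1 * ρ := mul_le_mul hα1 ht ht0 (by norm_num)
  have hαt0 : 0 ≤ α * t := mul_nonneg hα ht0
  have hrel : 3.25 * ρ * α ^ 2 * t ^ 2 ≤ 7 * ρ ^ 2 * (α * t) := by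
    have : ρ * (α * t) * (α * t) ≤ ρ * (α * t) * (2.1 * ρ) :=
      mul_le_mul_of_nonneg_left hαt (by positivity)
    nlinarith [mul_nonneg (sq_nonneg ρ) hαt0]
  have hbt : |b| * t ≤ 8 * ρ ^ 2 * (α * t) + 30 * ρ ^ 4 := by
    rcases le_total (4 * ρ) α with h | h
    · have hαpos : 0 < α := by linarith
      -- The point `4ρ²/α` balances the two terms of the bound on `b`.
      have h1 := hb (4 * ρ ^ 2 / α) (by positivity) (by rw [div_le_iff₀ hαpos]; nlinarith)
      have h2 : α * (4 * ρ ^ 2 / α) = 4 * ρ ^ 2 := by field_simp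
      rw [h2] at h1
      have h3 : |b| * (4 * ρ ^ 2) ≤ 30 * ρ ^ 4 * α := by
        have := mul_le_mul_of_nonneg_right h1 hαpos.le
        have e : |b| * (4 * ρ ^ 2 / α) * α = |b| * (4 * ρ ^ 2) := by field_simp
        rw [e] at this
        nlinarith [mul_nonneg (by positivity : 0 ≤ ρ ^ 4) hα]
      have h4 : |b| ≤ 8 * ρ ^ 2 * α := by
        have hpos : 0 < 4 * ρ ^ 2 := by positivity
        refine le_of_mul_le_mul_right (h3.trans ?_) hpos
        nlinarith [mul_nonneg (by positivity : 0 ≤ ρ ^ 4) hα]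
      have := mul_le_mul_of_nonneg_right h4 ht0
      nlinarith [(by positivity : 0 ≤ ρ ^ 4)]
    · have h1 := hb ρ hρ.le le_rfl
      have h2 : (α * ρ) ^ 2 ≤ (4 * ρ * ρ) ^ 2 :=
        pow_le_pow_left₀ (by positivity) (mul_le_mul_of_nonneg_right h hρ.le) 2
      have h3 : |b| * t ≤ |b| * ρ := mul_le_mul_of_nonneg_left ht (abs_nonneg b)
      have h4 : 0 ≤ ρ ^ 2 * (α * t) := by positivity
      nlinarith [(by positivity : 0 ≤ ρ ^ 4)]
  have hQ : |f t ^ 2 - (α * t) ^ 2| ≤ 15 * ρ ^ 2 * (α * t) + 42 * ρ ^ 4 := by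
    have h1 := H t (by rwa [abs_of_nonneg ht0])
    have h2 : |b * t| = |b| * t := by rw [abs_mul, abs_of_nonneg ht0]
    have h3 := abs_add_le (f t ^ 2 - α ^ 2 * t ^ 2 - b * t) (b * t)
    have e : f t ^ 2 - α ^ 2 * t ^ 2 - b * t + b * t = f t ^ 2 - (α * t) ^ 2 := by ring
    rw [e, h2] at h3
    linarith
  by_contra! hcon
  have hfac : |f t ^ 2 - (α * t) ^ 2| = |f t - α * t| * (f t + α * t) := by
    have h := abs_mul (f t - α * t) (f t + α * t)
    rw [abs_of_nonneg (add_nonneg (hf t) hαt0)] at h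
    rw [← h]
    congr 1; ring
  have hle : |f t - α * t| ≤ f t + α * t := by
    rw [abs_le]; constructor <;> linarith [hf t]
  rw [hfac] at hQ
  have h1 : 30 * ρ ^ 2 * (f t + α * t) ≤ |f t - α * t| * (f t + α * t) :=
    mul_le_mul_of_nonneg_right hcon.le (by linarith [hf t])
  have h2 : ρ ^ 2 * (30 * ρ ^ 2) ≤ ρ ^ 2 * (f t + α * t) :=
    mul_le_mul_of_nonneg_left (by linarith) (sq_nonneg ρ)
  have h3 : 0 ≤ ρ ^ 2 * f t := mul_nonneg (sq_nonneg ρ) (hf t)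
  have h4 : 0 < ρ ^ 4 := by positivity
  nlinarith

/-! ### The normalized divergence estimate -/

set_option maxHeartbeats 1000000 in
/-- The divergence estimate for the rescaled distance function
`d s t = d_X(γ₀(Ls), γ₁(Lt)) / L`, with `ρ = √ε`. -/
lemma linear_divergence_core {d : ℝ → ℝ → ℝ} {ρ : ℝ} (hρ : 0 < ρ) (hρ1 : ρ < 1 / 29)
    (hd : ∀ s t, 0 ≤ d s t)
    (hc₁ : ∀ t ∈ Set.Icc (-1 : ℝ) 1, ConcaveOn ℝ (Set.Icc (-1) 1) (fun s => d s t ^ 2 - s ^ 2))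
    (hc₂ : ∀ s ∈ Set.Icc (-1 : ℝ) 1, ConcaveOn ℝ (Set.Icc (-1) 1) (fun t => d s t ^ 2 - t ^ 2))
    (ht₁ : ∀ t ∈ Set.Icc (-1 : ℝ) 1, 2 ≤ d 1 t + d (-1) t ∧ |d 1 t - d (-1) t| ≤ 2)
    (ht₂ : 2 ≤ d 0 1 + d 0 (-1))
    (hl₁ : ∀ s ∈ Set.Icc (-1 : ℝ) 1, |d s 0 - (|s|)| ≤ d 0 0)
    (hl₂ : ∀ t ∈ Set.Icc (-1 : ℝ) 1, |d 0 t - (|t|)| ≤ d 0 0)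
    (hD : d 0 0 ≤ ρ ^ 2) :
    ∃ α : ℝ, 0 ≤ α ∧ ∀ t ∈ Set.Icc 0 ρ, |d t t - α * t| ≤ 30 * ρ ^ 2 := by
  set D := d 0 0 with hDdef
  have hD0 : 0 ≤ D := hd 0 0
  have m1 : (1 : ℝ) ∈ Set.Icc (-1 : ℝ) 1 := by norm_num
  have mm1 : (-1 : ℝ) ∈ Set.Icc (-1 : ℝ) 1 := by norm_num
  have m0 : (0 : ℝ) ∈ Set.Icc (-1 : ℝ) 1 := by norm_num
  have mρ : ∀ t, |t| ≤ ρ → t ∈ Set.Icc (-1 : ℝ) 1 := fun t ht => by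
    rw [abs_le] at ht; exact ⟨by linarith, by linarith⟩
  -- Foot of `γ₁ t` in the Euclidean comparison triangle over `γ₀|[-1, 1]`.
  set u : ℝ → ℝ := fun t => (d (-1) t ^ 2 - d 1 t ^ 2) / 4 with hu
  have S1 : ∀ t ∈ Set.Icc (-1 : ℝ) 1, u t ^ 2 ≤ (d 1 t ^ 2 + d (-1) t ^ 2) / 2 - 1 :=
    fun t ht => sq_foot_le (ht₁ t ht).1 (ht₁ t ht).2
  have S2 : ∀ t ∈ Set.Icc (-1 : ℝ) 1, ∀ s, |s| ≤ 1 →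
      |d s t ^ 2 - s ^ 2 - d 0 t ^ 2 + 2 * u t * s| ≤ |s| * (d 0 t ^ 2 - u t ^ 2) := by
    intro t ht s hs
    have := concave_near_line (hc₁ t ht) (w := u t ^ 2) one_pos le_rfl
      (by have := S1 t ht; norm_num; linarith) hs
    simp only [div_one] at this
    convert this using 2
    · simp only [hu]; ring
    · ring
  set m : ℝ := (d 0 1 ^ 2 - d 0 (-1) ^ 2) / 2 with hm
  have S3 : ∀ t, |t| ≤ 1 → |d 0 t ^ 2 - t ^ 2 - D ^ 2 - m * t| ≤ |t| * D ^ 2 := by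
    intro t ht
    have := concave_near_line (hc₂ 0 m0) (w := 0) one_pos le_rfl
      (by linarith [two_le_sq_add_sq ht₂]) ht
    simp only [div_one] at this
    convert this using 2
    · simp only [hm]; ring
    · ring
  set k : ℝ := (u ρ - u (-ρ)) / (2 * ρ) with hk
  set δ : ℝ := 2 * D ^ 2 + 2 * ρ ^ 2 - u ρ ^ 2 - u (-ρ) ^ 2 with hδ
  have hρm : ρ ∈ Set.Icc (-1 : ℝ) 1 := ⟨by linarith, by linarith⟩
  have hρm' : -ρ ∈ Set.Icc (-1 : ℝ) 1 := ⟨by linarith, by linarith⟩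
  -- Both `d(γ₀(±1), γ₁ t)² - t²` are concave while their sum is nearly constant, so each of
  -- them is nearly affine on `[-ρ, ρ]`.
  have S4 : ∀ t, |t| ≤ ρ → |u t - u 0 - k * t| ≤ |t| / ρ * (δ / 2) := by
    intro t ht
    have z1 := S1 ρ hρm
    have z2 := S1 (-ρ) hρm'
    have c0 := concave_combo (hc₁ 0 m0) m1 mm1 (a := 1 / 2) (b := 1 / 2) (by norm_num) (by norm_num)
      (by norm_num)
    have c1 := concave_combo (hc₂ 1 m1) hρm hρm' (a := 1 / 2) (b := 1 / 2) (by norm_num) (by norm_num)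
      (by norm_num)
    have c2 := concave_combo (hc₂ (-1) mm1) hρm hρm' (a := 1 / 2) (b := 1 / 2) (by norm_num) (by norm_num)
      (by norm_num)
    have e0 : (1 / 2 : ℝ) * 1 + 1 / 2 * -1 = 0 := by norm_num
    have e1 : (1 / 2 : ℝ) * ρ + 1 / 2 * -ρ = 0 := by ring
    simp only [e0, e1] at c0 c1 c2
    rw [← hDdef] at c0
    have a1 := concave_near_line (hc₂ 1 m1) (w := d 1 0 ^ 2 - δ) hρ hρm.2
      (by simp only [hδ]; linarith) ht
    have a2 := concave_near_line (hc₂ (-1) mm1) (w := d (-1) 0 ^ 2 - δ) hρ hρm.2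
      (by simp only [hδ]; linarith) ht
    have e2 : k * t = t / ρ * ((u ρ - u (-ρ)) / 2) := by simp only [hk]; field_simp
    rw [e2]
    simp only [hu]
    rw [abs_le] at a1 a2 ⊢
    constructor <;> linarith [a1.1, a1.2, a2.1, a2.2]
  have hu0 : |u 0| ≤ D := by
    have h1 := hl₁ 1 m1
    have h2 := hl₁ (-1) mm1
    simp only [abs_neg, abs_one] at h1 h2
    have hD1 : D ≤ 1 := hD.trans (pow_le_one₀ hρ.le hρm.2)
    have h := abs_sq_sub_sq_le hD1 h2 h1
    simp only [hu]
    rw [abs_div, abs_of_pos (by norm_num : (0 : ℝ) < 4)]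
    linarith
  have hmD : |m| ≤ 2 * D := by
    have h1 := hl₂ 1 m1
    have h2 := hl₂ (-1) mm1
    simp only [abs_neg, abs_one] at h1 h2
    have hD1 : D ≤ 1 := hD.trans (pow_le_one₀ hρ.le hρm.2)
    have h := abs_sq_sub_sq_le hD1 h1 h2
    simp only [hm]
    rw [abs_div, abs_of_pos (by norm_num : (0 : ℝ) < 2)]
    linarith
  have hupper : ∀ t, |t| ≤ ρ → |u t| ≤ |t| + D := by
    intro t ht
    have h1 := S2 t (mρ t ht) 1 (by norm_num)
    have h2 := (abs_nonneg _).trans h1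
    have h3 := (abs_le.1 (hl₂ t (mρ t ht))).2
    rw [abs_one, one_mul] at h2
    refine abs_le_of_sq_le_sq ?_ (by positivity)
    have h4 : d 0 t ^ 2 ≤ (|t| + D) ^ 2 := pow_le_pow_left₀ (hd 0 t) (by linarith) 2
    linarith
  have hkρ : 2 * ρ * k = u ρ - u (-ρ) := by simp only [hk]; field_simp
  have hkabs : |k| ≤ 1 + ρ := by
    have h1 := abs_le.1 (hupper ρ (by rw [abs_of_pos hρ]))
    have h2 := abs_le.1 (hupper (-ρ) (by rw [abs_neg, abs_of_pos hρ]))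
    rw [abs_neg, abs_of_pos hρ] at h2
    rw [abs_of_pos hρ] at h1
    have h2ρ : 0 < 2 * ρ := by positivity
    exact abs_le.2 ⟨le_of_mul_le_mul_left (by linarith) h2ρ,
      le_of_mul_le_mul_left (by linarith) h2ρ⟩
  set κ : ℝ := max 0 (1 - k) with hκ
  have hκ0 : 0 ≤ κ := le_max_left _ _
  have hκ1 : 1 - k ≤ κ := le_max_right _ _
  have hκ2 : κ ≤ 2 + ρ := by
    rw [abs_le] at hkabs
    exact max_le (by linarith) (by linarith)
  have hkk : 1 - k ^ 2 ≤ 2 * κ := by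
    linarith [sq_nonneg (1 - k)]
  have hD2 : D ^ 2 ≤ ρ ^ 4 := by
    calc D ^ 2 ≤ (ρ ^ 2) ^ 2 := pow_le_pow_left₀ hD0 hD 2
      _ = ρ ^ 4 := by ring
  have hδ0 : δ ≤ 2 * ρ ^ 4 + 4 * ρ ^ 2 * κ := by
    have h1 : 2 * (ρ * k) ^ 2 ≤ u ρ ^ 2 + u (-ρ) ^ 2 := by
      have : ρ * k = (u ρ - u (-ρ)) / 2 := by linarith
      rw [this]; linarith [sq_nonneg (u ρ + u (-ρ))]
    have h2 := mul_le_mul_of_nonneg_left hkk (sq_nonneg ρ)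
    simp only [hδ]
    linarith
  set b : ℝ := m - 2 * u 0 with hb
  have H1 : ∀ t, |t| ≤ ρ → |d t t ^ 2 - 2 * (1 - k) * t ^ 2 - b * t - D ^ 2|
      ≤ 6.5 * ρ * κ * t ^ 2 + 5 * ρ ^ 4 := by
    intro t ht
    set T := |t| with hT
    have hT0 : 0 ≤ T := abs_nonneg t
    have hTT : t ^ 2 = T ^ 2 := (sq_abs t).symm
    have hT1 : T ≤ 1 := by linarith
    have r1 := S2 t (mρ t ht) t hT1
    have r2 := S3 t hT1
    have r3 := S4 t ht
    set y := T / ρ with hy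
    have hTy : T = y * ρ := by rw [hy]; field_simp
    have hy0 : 0 ≤ y := by positivity
    have hy1 : y ≤ 1 := by rw [hy, div_le_one hρ]; exact ht
    -- `y² ρ²κ = t²κ` is the scale of all relative errors below.
    set Z : ℝ := y ^ 2 * ρ ^ 2 * κ with hZ
    have hZ0 : 0 ≤ Z := by positivity
    have hρ4 : 0 < ρ ^ 4 := by positivity
    -- `t` times the affine error of `u`.
    have w1 : T * (y * δ) ≤ 2 * ρ ^ 5 + 4 * ρ * Z := by
      have := mul_le_mul_of_nonneg_left hδ0 (by positivity : 0 ≤ y ^ 2 * ρ)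
      have h2 : y ^ 2 * ρ ^ 5 ≤ 1 * ρ ^ 5 :=
        mul_le_mul_of_nonneg_right (pow_le_one₀ hy0 hy1) (by positivity)
      rw [hTy]; simp only [hZ]; linarith
    have p1 : |t * (u t - u 0 - k * t)| ≤ ρ ^ 5 + 2 * ρ * Z := by
      rw [abs_mul]
      have := mul_le_mul_of_nonneg_left r3 hT0
      rw [← hT]; linarith
    -- The midpoint defect `η = d(γ₀ 0, γ₁ t)² - u²`.
    have w2 : d 0 t ^ 2 - u t ^ 2 ≤ 2 * κ * T ^ 2 + 2 * (1 + ρ) * (ρ ^ 3 + ρ ^ 5 + 2 * ρ * Z)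
        + 2 * ρ ^ 3 + 2 * ρ ^ 4 := by
      have q1 : d 0 t ^ 2 ≤ T ^ 2 + 2 * ρ ^ 3 + 2 * ρ ^ 4 := by
        have h1 : m * t ≤ 2 * ρ ^ 3 := by
          calc m * t ≤ |m * t| := le_abs_self _
            _ = |m| * T := abs_mul _ _
            _ ≤ (2 * ρ ^ 2) * ρ := mul_le_mul (by linarith) ht hT0 (by positivity)
            _ = 2 * ρ ^ 3 := by ring
        have h2 : T * D ^ 2 ≤ 1 * ρ ^ 4 := mul_le_mul hT1 hD2 (sq_nonneg _) (by norm_num)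
        have := (abs_le.1 r2).2
        linarith
      have q2 : -(k * (t * (u t - k * t))) ≤ (1 + ρ) * (ρ ^ 3 + ρ ^ 5 + 2 * ρ * Z) := by
        have h1 : |t * u 0| ≤ ρ ^ 3 := by
          rw [abs_mul]
          calc T * |u 0| ≤ ρ * ρ ^ 2 :=
                mul_le_mul ht (hu0.trans hD) (abs_nonneg _) hρ.le
            _ = ρ ^ 3 := by ring
        have h2 : |t * (u t - k * t)| ≤ ρ ^ 3 + ρ ^ 5 + 2 * ρ * Z := by
          have e : t * (u t - k * t) = t * u 0 + t * (u t - u 0 - k * t) := by ring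
          rw [e]
          linarith [abs_add_le (t * u 0) (t * (u t - u 0 - k * t))]
        calc -(k * (t * (u t - k * t))) ≤ |k * (t * (u t - k * t))| := neg_le_abs _
          _ = |k| * |t * (u t - k * t)| := abs_mul _ _
          _ ≤ _ := mul_le_mul hkabs h2 (abs_nonneg _) (by positivity)
      have q3 : T ^ 2 * (1 - k ^ 2) ≤ T ^ 2 * (2 * κ) :=
        mul_le_mul_of_nonneg_left hkk (sq_nonneg T)
      have q4 : u t ^ 2 = k ^ 2 * T ^ 2 + 2 * (k * (t * (u t - k * t)))
          + (u t - k * t) ^ 2 := by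
        rw [← hTT]; ring
      linarith [sq_nonneg (u t - k * t)]
    have hZT : κ * T ^ 2 = Z := by rw [hTy]; simp only [hZ]; ring
    have p2 : T * (d 0 t ^ 2 - u t ^ 2) ≤ ρ * (2 * Z + 2 * (1 + ρ) * (ρ ^ 3 + ρ ^ 5 + 2 * ρ * Z)
        + 2 * ρ ^ 3 + 2 * ρ ^ 4) := by
      refine (mul_le_mul_of_nonneg_left w2 hT0).trans ?_
      have : 2 * κ * T ^ 2 = 2 * Z := by linarith
      rw [this]
      exact mul_le_mul_of_nonneg_right ht (by positivity)
    have p3 : T * D ^ 2 ≤ ρ * ρ ^ 4 := mul_le_mul ht hD2 (sq_nonneg _) hρ.le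
    have e : d t t ^ 2 - 2 * (1 - k) * t ^ 2 - b * t - D ^ 2
        = (d t t ^ 2 - t ^ 2 - d 0 t ^ 2 + 2 * u t * t)
          + (d 0 t ^ 2 - t ^ 2 - D ^ 2 - m * t) - 2 * (t * (u t - u 0 - k * t)) := by
      simp only [hb]; ring
    have tri : |d t t ^ 2 - 2 * (1 - k) * t ^ 2 - b * t - D ^ 2|
        ≤ T * (d 0 t ^ 2 - u t ^ 2) + T * D ^ 2 + 2 * (ρ ^ 5 + 2 * ρ * Z) := by
      rw [e]
      rw [abs_le] at r1 r2 p1 ⊢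
      constructor <;> linarith [r1.1, r1.2, r2.1, r2.2, p1.1, p1.2]
    have e2 : 6.5 * ρ * κ * t ^ 2 = 6.5 * ρ * Z := by rw [hTT, ← hZT]; ring
    rw [e2]
    refine tri.trans ?_
    have hρZ : 0 ≤ ρ * Z := by positivity
    have n1 : ρ * (ρ * Z) ≤ 1 / 29 * (ρ * Z) := mul_le_mul_of_nonneg_right hρ1.le hρZ
    have n2 : ρ * (ρ * (ρ * Z)) ≤ 1 / 29 * (ρ * (ρ * Z)) :=
      mul_le_mul_of_nonneg_right hρ1.le (by positivity)
    have n3 : ρ * ρ ^ 4 ≤ 1 / 29 * ρ ^ 4 := mul_le_mul_of_nonneg_right hρ1.le hρ4.le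
    have n4 : ρ * (ρ * ρ ^ 4) ≤ 1 / 29 * (ρ * ρ ^ 4) :=
      mul_le_mul_of_nonneg_right hρ1.le (by positivity)
    have n5 : ρ * (ρ * (ρ * ρ ^ 4)) ≤ 1 / 29 * (ρ * (ρ * ρ ^ 4)) :=
      mul_le_mul_of_nonneg_right hρ1.le (by positivity)
    have e3 : ρ * (2 * Z + 2 * (1 + ρ) * (ρ ^ 3 + ρ ^ 5 + 2 * ρ * Z) + 2 * ρ ^ 3 + 2 * ρ ^ 4)
        = 2 * (ρ * Z) + 4 * (ρ * (ρ * Z)) + 4 * (ρ * (ρ * (ρ * Z))) + 4 * ρ ^ 4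
          + 4 * (ρ * ρ ^ 4) + 2 * (ρ * (ρ * ρ ^ 4)) + 2 * (ρ * (ρ * (ρ * ρ ^ 4))) := by ring
    have e4 : ρ ^ 5 = ρ * ρ ^ 4 := by ring
    linarith
  -- `1 - k` can be slightly negative; nonnegativity of `d²` at `±ρ` bounds its size.
  have hneg : (κ - (1 - k)) * ρ ^ 2 ≤ 3 * ρ ^ 4 := by
    rcases le_total 0 (1 - k) with h | h
    · have : κ = 1 - k := max_eq_right h
      rw [this, sub_self, zero_mul]; positivity
    · have hk0 : κ = 0 := max_eq_left h
      have h1 := (abs_le.1 (H1 ρ (by rw [abs_of_pos hρ]))).2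
      have h2 := (abs_le.1 (H1 (-ρ) (by rw [abs_neg, abs_of_pos hρ]))).2
      rw [hk0] at h1 h2 ⊢
      linarith [sq_nonneg (d ρ ρ), sq_nonneg (d (-ρ) (-ρ))]
  have hα2 : Real.sqrt (2 * κ) ^ 2 = 2 * κ := Real.sq_sqrt (by positivity)
  refine ⟨Real.sqrt (2 * κ), Real.sqrt_nonneg _, fun t ht => ?_⟩
  refine linear_of_sq_near_quadratic (f := fun t => d t t) (b := b) hρ hρ1 (fun t => hd t t)
    (Real.sqrt_nonneg _) ?_ (fun x hx => ?_) ht.1 ht.2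
  · rw [Real.sqrt_le_left (by norm_num)]
    linarith
  · have h1 := abs_le.1 (H1 x hx)
    have hx2 : x ^ 2 ≤ ρ ^ 2 := by
      rw [← sq_abs x]; exact pow_le_pow_left₀ (abs_nonneg x) hx 2
    have h2 : (κ - (1 - k)) * x ^ 2 ≤ 3 * ρ ^ 4 :=
      (mul_le_mul_of_nonneg_left hx2 (by linarith)).trans hneg
    have h3 : 0 ≤ (κ - (1 - k)) * x ^ 2 := mul_nonneg (by linarith) (sq_nonneg x)
    rw [hα2, abs_le]
    have := sq_nonneg D
    constructor <;> linarith [h1.1, h1.2]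

/-! ### Curvature bound and rescaling -/

/-- Along a unit-speed minimizing geodesic, `d(z, ·)² - s²` is concave; here the geodesic
and the distance are rescaled to the parameter interval `[-1, 1]`. -/
lemma CBB0.concaveOn {X : Type*} [MetricSpace X] (hX : CBB0 X) {L : ℝ} (hL : 0 < L)
    {γ : ℝ → X}
    (hγ : ∀ s ∈ Set.Icc (-L) L, ∀ t ∈ Set.Icc (-L) L, dist (γ s) (γ t) = |s - t|) (z : X) :
    ConcaveOn ℝ (Set.Icc (-1) 1) (fun s => (dist z (γ (L * s)) / L) ^ 2 - s ^ 2) := by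
  refine ⟨convex_Icc _ _, fun x hx y hy a b ha hb hab => ?_⟩
  have hmem : ∀ r ∈ Set.Icc (-1 : ℝ) 1, L * r ∈ Set.Icc (-L) L := fun r hr =>
    ⟨by nlinarith [hr.1], by nlinarith [hr.2]⟩
  have hcomb : ∀ τ ∈ Set.Icc (0 : ℝ) 1, (1 - τ) * x + τ * y ∈ Set.Icc (-1 : ℝ) 1 :=
    fun τ hτ => (convex_Icc (-1 : ℝ) 1) hx hy (by linarith [hτ.2]) hτ.1 (by ring)
  have hdist : ∀ s ∈ Set.Icc (0 : ℝ) 1, ∀ t ∈ Set.Icc (0 : ℝ) 1,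
      dist (γ (L * ((1 - s) * x + s * y))) (γ (L * ((1 - t) * x + t * y)))
        = |s - t| * (L * |x - y|) := by
    intro s hs t ht
    rw [hγ _ (hmem _ (hcomb s hs)) _ (hmem _ (hcomb t ht)), ← abs_of_pos hL, ← abs_mul,
      ← abs_mul, abs_of_pos hL, ← abs_neg]
    congr 1; ring
  have h0 : (0 : ℝ) ∈ Set.Icc (0 : ℝ) 1 := by norm_num
  have h1 : (1 : ℝ) ∈ Set.Icc (0 : ℝ) 1 := by norm_num
  have hend : dist (γ (L * ((1 - 0) * x + 0 * y))) (γ (L * ((1 - 1) * x + 1 * y)))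
      = L * |x - y| := by
    rw [hdist 0 h0 1 h1]; norm_num
  have key := hX.2 (fun τ => γ (L * ((1 - τ) * x + τ * y)))
    (fun s hs t ht => by rw [hdist s hs t ht, hend]) z b ⟨hb, by linarith⟩
  simp only [hend] at key
  have e0 : (1 - 0) * x + 0 * y = x := by ring
  have e1 : (1 - 1) * x + 1 * y = y := by ring
  have ea : 1 - b = a := by linarith
  rw [e0, e1, ea, mul_pow, sq_abs] at key
  simp only [smul_eq_mul, div_pow]
  have hL2 : 0 < L ^ 2 := by positivity
  rw [← sub_nonneg]
  have e : dist z (γ (L * (a * x + b * y))) ^ 2 / L ^ 2 - (a * x + b * y) ^ 2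
      - (a * (dist z (γ (L * x)) ^ 2 / L ^ 2 - x ^ 2)
        + b * (dist z (γ (L * y)) ^ 2 / L ^ 2 - y ^ 2))
      = (dist z (γ (L * (a * x + b * y))) ^ 2 - (a * dist z (γ (L * x)) ^ 2
        + b * dist z (γ (L * y)) ^ 2 - b * a * (L ^ 2 * (x - y) ^ 2))) / L ^ 2 := by
    field_simp
    rw [show a = 1 - b by linarith]
    ring
  rw [e]
  exact div_nonneg (by linarith) hL2.le

/-- In a CBB(0) space, two unit-speed minimizing geodesics `γ₀, γ₁ : [−L,L] → X` with
`d(γ₀(0), γ₁(0)) ≤ εL` either diverge linearly or stay bounded: there is `α ≥ 0` with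
`|d(γ₀(x), γ₁(x)) − αx| ≤ 30εL` for all `x ∈ [0, √ε·L]`. -/
theorem cbb0_linear_divergence {X : Type*} [MetricSpace X] (hX : CBB0 X)
    {Y : Type*} [MetricSpace Y] (h : Y → X) (ψ Lh : ℝ) (hψ : 0 ≤ ψ)
    (hLLD₁ : ∀ u v : Y, ψ < dist u v → dist (h u) (h v) ≤ Lh * dist u v)
    (hLLD₂ : ∀ u v : Y, dist u v ≤ ψ → dist (h u) (h v) ≤ Lh * ψ)
    (L ε : ℝ) (hL : 0 < L) (hε : ε ∈ Set.Ioo (0 : ℝ) 1)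
    (γ₀ γ₁ : ℝ → X)
    (hγ₀ : ∀ s ∈ Set.Icc (-L) L, ∀ t ∈ Set.Icc (-L) L, dist (γ₀ s) (γ₀ t) = |s - t|)
    (hγ₁ : ∀ s ∈ Set.Icc (-L) L, ∀ t ∈ Set.Icc (-L) L, dist (γ₁ s) (γ₁ t) = |s - t|)
    (hclose : dist (γ₀ 0) (γ₁ 0) ≤ ε * L) :
    ∃ α : ℝ, 0 ≤ α ∧ ∀ x ∈ Set.Icc (0 : ℝ) (Real.sqrt ε * L),
      |dist (γ₀ x) (γ₁ x) - α * x| ≤ 30 * ε * L := by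
  obtain ⟨hε0, hε1⟩ := hε
  set ρ := Real.sqrt ε with hρdef
  have hρ : 0 < ρ := Real.sqrt_pos.2 hε0
  have hρ2 : ρ ^ 2 = ε := Real.sq_sqrt hε0.le
  have hρlt : ρ < 1 := by nlinarith
  have hmem : ∀ r ∈ Set.Icc (-1 : ℝ) 1, L * r ∈ Set.Icc (-L) L := fun r hr =>
    ⟨by nlinarith [hr.1], by nlinarith [hr.2]⟩
  have h0L : (0 : ℝ) ∈ Set.Icc (-L) L := ⟨by linarith, hL.le⟩
  rcases lt_or_ge ρ (1 / 29) with hsmall | hbig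
  · set d : ℝ → ℝ → ℝ := fun s t => dist (γ₀ (L * s)) (γ₁ (L * t)) / L with hd
    have hLd : ∀ s t, dist (γ₀ (L * s)) (γ₁ (L * t)) = L * d s t := fun s t => by
      simp only [hd]; field_simp
    have g₀ : ∀ s ∈ Set.Icc (-1 : ℝ) 1, ∀ s' ∈ Set.Icc (-1 : ℝ) 1,
        dist (γ₀ (L * s)) (γ₀ (L * s')) = L * |s - s'| := fun s hs s' hs' => by
      rw [hγ₀ _ (hmem s hs) _ (hmem s' hs'), ← mul_sub, abs_mul, abs_of_pos hL]
    have g₁ : ∀ s ∈ Set.Icc (-1 : ℝ) 1, ∀ s' ∈ Set.Icc (-1 : ℝ) 1,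
        dist (γ₁ (L * s)) (γ₁ (L * s')) = L * |s - s'| := fun s hs s' hs' => by
      rw [hγ₁ _ (hmem s hs) _ (hmem s' hs'), ← mul_sub, abs_mul, abs_of_pos hL]
    have lip₀ : ∀ t, ∀ s ∈ Set.Icc (-1 : ℝ) 1, ∀ s' ∈ Set.Icc (-1 : ℝ) 1,
        |s - s'| ≤ d s t + d s' t ∧ d s t ≤ d s' t + |s - s'| := by
      intro t s hs s' hs'
      have h1 := dist_triangle_right (γ₀ (L * s)) (γ₀ (L * s')) (γ₁ (L * t))
      have h2 := dist_triangle (γ₀ (L * s)) (γ₀ (L * s')) (γ₁ (L * t))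
      rw [g₀ s hs s' hs', hLd, hLd] at h1 h2
      exact ⟨le_of_mul_le_mul_left (by linarith) hL, le_of_mul_le_mul_left (by linarith) hL⟩
    have lip₁ : ∀ s, ∀ t ∈ Set.Icc (-1 : ℝ) 1, ∀ t' ∈ Set.Icc (-1 : ℝ) 1,
        |t - t'| ≤ d s t + d s t' ∧ d s t ≤ d s t' + |t - t'| := by
      intro s t ht t' ht'
      have h1 := dist_triangle_left (γ₁ (L * t)) (γ₁ (L * t')) (γ₀ (L * s))
      have h2 := dist_triangle_right (γ₀ (L * s)) (γ₁ (L * t)) (γ₁ (L * t'))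
      rw [g₁ t ht t' ht', hLd, hLd] at h1 h2
      exact ⟨le_of_mul_le_mul_left (by linarith) hL, le_of_mul_le_mul_left (by linarith) hL⟩
    have m1 : (1 : ℝ) ∈ Set.Icc (-1 : ℝ) 1 := by norm_num
    have mm1 : (-1 : ℝ) ∈ Set.Icc (-1 : ℝ) 1 := by norm_num
    have m0 : (0 : ℝ) ∈ Set.Icc (-1 : ℝ) 1 := by norm_num
    have e2 : |(1 : ℝ) - -1| = 2 := by norm_num
    have e2' : |(-1 : ℝ) - 1| = 2 := by norm_num
    obtain ⟨α, hα, H⟩ := linear_divergence_core (d := d) hρ hsmall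
      (fun s t => by positivity)
      (fun t _ => by
        have := hX.concaveOn hL hγ₀ (γ₁ (L * t))
        simpa only [hd, dist_comm] using this)
      (fun s _ => hX.concaveOn hL hγ₁ (γ₀ (L * s)))
      (fun t ht => by
        have h1 := lip₀ t 1 m1 (-1) mm1
        have h2 := lip₀ t (-1) mm1 1 m1
        rw [e2] at h1
        rw [e2'] at h2
        exact ⟨h1.1, abs_le.2 ⟨by linarith [h2.2], by linarith [h1.2]⟩⟩)
      (by have h1 := lip₁ 0 1 m1 (-1) mm1
          rw [e2] at h1
          exact h1.1)
      (fun s hs => by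
        have h1 := lip₀ 0 s hs 0 m0
        rw [sub_zero] at h1
        exact abs_le.2 ⟨by linarith [h1.1], by linarith [h1.2]⟩)
      (fun t ht => by
        have h1 := lip₁ 0 t ht 0 m0
        rw [sub_zero] at h1
        exact abs_le.2 ⟨by linarith [h1.1], by linarith [h1.2]⟩)
      (by simp only [hd, mul_zero]
          rw [div_le_iff₀ hL, hρ2]
          exact hclose)
    refine ⟨α, hα, fun x hx => ?_⟩
    have hxL : L * (x / L) = x := by field_simp
    have h1 := H (x / L) ⟨div_nonneg hx.1 hL.le, by rw [div_le_iff₀ hL]; exact hx.2⟩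
    have h2 := hLd (x / L) (x / L)
    rw [hxL] at h2
    have e : dist (γ₀ x) (γ₁ x) - α * x = L * (d (x / L) (x / L) - α * (x / L)) := by
      rw [h2]; field_simp
    rw [e, abs_mul, abs_of_pos hL]
    calc L * |d (x / L) (x / L) - α * (x / L)| ≤ L * (30 * ρ ^ 2) :=
          mul_le_mul_of_nonneg_left h1 hL.le
      _ = 30 * ε * L := by rw [hρ2]; ring
  · refine ⟨1, zero_le_one, fun x hx => ?_⟩
    have hxL : x ≤ L := hx.2.trans (by nlinarith)
    have hxm : x ∈ Set.Icc (-L) L := ⟨by linarith [hx.1], hxL⟩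
    have h1 := hγ₀ x hxm 0 h0L
    have h2 := hγ₁ 0 h0L x hxm
    rw [sub_zero, abs_of_nonneg hx.1] at h1
    rw [zero_sub, abs_neg, abs_of_nonneg hx.1] at h2
    have h3 := dist_triangle4 (γ₀ x) (γ₀ 0) (γ₁ 0) (γ₁ x)
    have h4 := dist_nonneg (x := γ₀ x) (y := γ₁ x)
    have h5 : ρ * L ≤ 29 * (ε * L) := by
      have : ρ ≤ 29 * ε := by nlinarith
      nlinarith
    have h6 : 0 < ε * L := by positivity
    have h7 := hx.2
    rw [abs_le]
    constructor <;> linarith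
end
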